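/- There exists exactly one function f : ℕ → Stream' ℕ satisfying the mixed recursive–corecursive equation f n = (if n > 0 then (f (n − 1)) ⊕ (SCons 0 (f (n + 1))) else SCons 1 (f 1)) for all n, where ⊕ is pointwise addition of streams; moreover f 1 is the stream of Catalan numbers C₁, C₂, C₃, …: (f 1).get i = catalan (i + 1) for all i. -/

import Mathlib

open Stream'

/-- Pointwise addition of streams. -/
def sadd (xs ys : Stream' ℕ) : Stream' ℕ := fun n => xs.get n + ys.get n

infixl:65 " ⊕ " => sadd

theorem cat_series_eq : (PowerSeries.mk catalan : PowerSeries ℕ) =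
    1 + PowerSeries.X * (PowerSeries.mk catalan) ^ 2 := by
  ext n
  cases n with
  | zero => simp
  | succ n =>
    rw [map_add, PowerSeries.coeff_succ_X_mul]
    simp only [PowerSeries.coeff_mk, pow_two,
      PowerSeries.coeff_mul, catalan_succ', PowerSeries.coeff_one]
    simp

theorem eqn_iff (f : ℕ → Stream' ℕ) :
    (∀ n, f n =
        if n > 0 then (f (n - 1)) ⊕ (Stream'.cons 0 (f (n + 1)))
        else Stream'.cons 1 (f 1)) ↔
    ((f 0).get 0 = 1 ∧ (∀ i, (f 0).get (i + 1) = (f 1).get i) ∧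
      (∀ n, (f (n + 1)).get 0 = (f n).get 0) ∧
      (∀ n i, (f (n + 1)).get (i + 1) = (f n).get (i + 1) + (f (n + 2)).get i)) := by
  constructor
  · intro h
    refine ⟨?_, ?_, ?_, ?_⟩
    · rw [h 0]; rfl
    · intro i; rw [h 0]; rfl
    · intro n; rw [h (n + 1)]; rfl
    · intro n i; rw [h (n + 1)]; rfl
  · rintro ⟨h1, h2, h3, h4⟩ n
    apply Stream'.ext
    intro i
    cases n with
    | zero =>
      cases i with
      | zero => exact h1
      | succ i => exact h2 i
    | succ n =>
      cases i with
      | zero => exact h3 n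
      | succ i => exact h4 n i

theorem eqn_sol (f : ℕ → Stream' ℕ) (h : ∀ n, f n =
        if n > 0 then (f (n - 1)) ⊕ (Stream'.cons 0 (f (n + 1)))
        else Stream'.cons 1 (f 1)) (i : ℕ) : ∀ n, (f n).get i =
      PowerSeries.coeff i ((PowerSeries.mk catalan : PowerSeries ℕ) ^ (n + 1)) := by
  obtain ⟨h1, h2, h3, h4⟩ := (eqn_iff f).1 h
  induction i with
  | zero =>
    intro n
    induction n with
    | zero => simp [h1]
    | succ n ih => rw [h3, ih]; simp
  | succ i ih =>
    intro n
    induction n with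
    | zero =>
      rw [h2, ih, zero_add, pow_one]
      conv_rhs => rw [cat_series_eq]
      simp [PowerSeries.coeff_succ_X_mul, PowerSeries.coeff_one]
    | succ n ihn =>
      rw [h4, ihn, ih, pow_succ _ (n + 1)]
      conv_rhs => enter [2, 2]; rw [cat_series_eq]
      rw [mul_add, mul_one, map_add, ← PowerSeries.coeff_succ_X_mul i]
      congr 2
      ring

noncomputable def solStream (n : ℕ) : Stream' ℕ := fun i =>
  PowerSeries.coeff i ((PowerSeries.mk catalan : PowerSeries ℕ) ^ (n + 1))

theorem solStream_get (n i : ℕ) : (solStream n).get i =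
    PowerSeries.coeff i ((PowerSeries.mk catalan : PowerSeries ℕ) ^ (n + 1)) := rfl

theorem eqn_exists : ∀ n, solStream n =
    if n > 0 then (solStream (n - 1)) ⊕ (Stream'.cons 0 (solStream (n + 1)))
    else Stream'.cons 1 (solStream 1) := by
  rw [eqn_iff]
  simp only [solStream_get]
  refine ⟨by simp, ?_, by simp, ?_⟩
  · intro i
    rw [zero_add, pow_one]
    conv_lhs => rw [cat_series_eq]
    simp [PowerSeries.coeff_succ_X_mul, PowerSeries.coeff_one]
  · intro n i
    rw [pow_succ _ (n + 1)]
    conv_lhs => enter [2, 2]; rw [cat_series_eq]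
    rw [mul_add, mul_one, map_add, ← PowerSeries.coeff_succ_X_mul i]
    congr 2
    ring

theorem stmt_16 :
    (∃! f : ℕ → Stream' ℕ,
      ∀ n, f n =
        if n > 0 then (f (n - 1)) ⊕ (Stream'.cons 0 (f (n + 1)))
        else Stream'.cons 1 (f 1)) ∧
    (∀ f : ℕ → Stream' ℕ,
      (∀ n, f n =
        if n > 0 then (f (n - 1)) ⊕ (Stream'.cons 0 (f (n + 1)))
        else Stream'.cons 1 (f 1)) →
      ∀ i, (f 1).get i = catalan (i + 1)) := by
  refine ⟨⟨solStream, eqn_exists, ?_⟩, ?_⟩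
  · intro g hg
    funext n
    apply Stream'.ext
    intro i
    exact eqn_sol g hg i n
  · intro f hf i
    rw [← ((eqn_iff f).1 hf).2.1 i, eqn_sol f hf]
    simp
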